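/- arXiv:2301.02754 — 2 statements merged into one kernel-verified Lean document; each statement's English description precedes it below -/
import Mathlib

section
/- Let (Ω, ℱ, P) be a probability space, m ≥ 2, n ≥ 1, and let Y : Ω → ℝ^m be measurable with 1 + Y_i > 0 P-almost surely for every i. Assume that for every K ∈ 𝒦 the function log(1 + K·Y) is integrable, and fix j ∈ {1,…,m} such that for every i ≠ j the ratio (1 + Y_i)/(1 + Y_j) is integrable with E[(1 + Y_i)/(1 + Y_j)] ≤ 1. Then for every K ∈ 𝒦, (1/n) E[log(1 + K·Y)] ≤ (1/n) E[log(1 + Y_j)]; that is, the expected logarithmic growth over 𝒦 is maximized by the unit vector e_j. -/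
/-! With `R_i = (1 + Y_i) / (1 + Y_j)`, the simplex constraint gives
`1 + K·Y = (1 + Y_j) ∑ K_i R_i`, and `log x ≤ x - 1` yields the pointwise bound
`log (1 + K·Y) ≤ log (1 + Y_j) + (∑ K_i R_i - 1)`. Taking expectations, the last term
contributes at most `∑ K_i - 1 = 0`, since `E[R_i] ≤ 1` for every `i` (with `R_j = 1`). -/

open MeasureTheory

/-- The unit simplex in `ℝ^m`. -/
def unitSimplex (m : ℕ) : Set (Fin m → ℝ) :=
  {K | (∀ i, 0 ≤ K i) ∧ ∑ i, K i = 1}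

/-- Lemma 2 (Dominance): if asset `j` dominates all other assets in the sense
`E[(1 + Y_i)/(1 + Y_j)] ≤ 1` for all `i ≠ j`, then the expected logarithmic growth
`g(K) = (1/n) E[log(1 + K·Y)]` over the unit simplex is maximized by the unit vector `e_j`. -/
theorem dominance_lemma {Ω : Type*} [MeasurableSpace Ω] (P : Measure Ω)
    [IsProbabilityMeasure P] (m n : ℕ) (hm : 2 ≤ m) (hn : 1 ≤ n)
    (Y : Ω → Fin m → ℝ) (hY : Measurable Y)
    (hpos : ∀ i, ∀ᵐ ω ∂P, 0 < 1 + Y ω i)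
    (hint : ∀ K ∈ unitSimplex m,
      Integrable (fun ω => Real.log (1 + ∑ i, K i * Y ω i)) P)
    (j : Fin m)
    (hratioInt : ∀ i, i ≠ j → Integrable (fun ω => (1 + Y ω i) / (1 + Y ω j)) P)
    (hratio : ∀ i, i ≠ j → ∫ ω, (1 + Y ω i) / (1 + Y ω j) ∂P ≤ 1) :
    ∀ K ∈ unitSimplex m,
      (1 / (n : ℝ)) * ∫ ω, Real.log (1 + ∑ i, K i * Y ω i) ∂P
        ≤ (1 / (n : ℝ)) * ∫ ω, Real.log (1 + Y ω j) ∂P := by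
  intro K hK
  obtain ⟨hK0, hK1⟩ := hK
  refine mul_le_mul_of_nonneg_left ?_ (by positivity)
  have hpos_all : ∀ᵐ ω ∂P, ∀ i, 0 < 1 + Y ω i := ae_all_iff.2 hpos
  have hself : (fun ω => (1 + Y ω j) / (1 + Y ω j)) =ᵐ[P] fun _ => (1 : ℝ) := by
    filter_upwards [hpos j] with ω hω using div_self hω.ne'
  have hRint : ∀ i, Integrable (fun ω => (1 + Y ω i) / (1 + Y ω j)) P := by
    intro i
    by_cases hij : i = j
    · subst hij
      exact (integrable_const (1 : ℝ)).congr hself.symm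
    · exact hratioInt i hij
  have hR : ∀ i, ∫ ω, (1 + Y ω i) / (1 + Y ω j) ∂P ≤ 1 := by
    intro i
    by_cases hij : i = j
    · subst hij
      rw [integral_congr_ae hself]
      simp
    · exact hratio i hij
  -- `log (1 + Y_j)` is integrable because it is the growth of the vertex `e_j`.
  have hlogj : Integrable (fun ω => Real.log (1 + Y ω j)) P := by
    have h := hint (Pi.single j 1)
      ⟨fun i => by by_cases hij : i = j <;> simp [hij],
        by simp [Pi.single_apply]⟩
    simpa [Pi.single_apply] using h
  have hSint : Integrable (fun ω => ∑ i, K i * ((1 + Y ω i) / (1 + Y ω j))) P :=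
    integrable_finsetSum _ fun i _ => (hRint i).const_mul (K i)
  have hS : ∫ ω, ∑ i, K i * ((1 + Y ω i) / (1 + Y ω j)) ∂P ≤ 1 := by
    rw [integral_finsetSum _ fun i _ => (hRint i).const_mul (K i)]
    refine (Finset.sum_le_sum fun i _ => ?_).trans_eq hK1
    rw [integral_const_mul]
    exact mul_le_of_le_one_right (hK0 i) (hR i)
  have hbound : ∀ᵐ ω ∂P, Real.log (1 + ∑ i, K i * Y ω i) ≤
      Real.log (1 + Y ω j) + (∑ i, K i * ((1 + Y ω i) / (1 + Y ω j)) - 1) := by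
    filter_upwards [hpos_all] with ω hω
    have hsum : 1 + ∑ i, K i * Y ω i = ∑ i, K i * (1 + Y ω i) := by
      simp only [mul_add, mul_one, Finset.sum_add_distrib, hK1]
    have hdiv : ∑ i, K i * ((1 + Y ω i) / (1 + Y ω j)) =
        (1 + ∑ i, K i * Y ω i) / (1 + Y ω j) := by
      rw [hsum, Finset.sum_div]
      exact Finset.sum_congr rfl fun i _ => (mul_div_assoc _ _ _).symm
    have hwealth : 0 < 1 + ∑ i, K i * Y ω i := by
      -- Some weight is nonzero, as the weights sum to `1`.
      obtain ⟨i, hi, hKi⟩ := Finset.exists_ne_zero_of_sum_ne_zero (hK1.trans_ne one_ne_zero)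
      rw [hsum]
      exact Finset.sum_pos' (fun k _ => mul_nonneg (hK0 k) (hω k).le)
        ⟨i, hi, mul_pos ((hK0 i).lt_of_ne' hKi) (hω i)⟩
    have hlog := Real.log_le_sub_one_of_pos (div_pos hwealth (hω j))
    rw [Real.log_div hwealth.ne' (hω j).ne'] at hlog
    rw [hdiv]
    linarith
  have hdiff : Integrable
      (fun ω => ∑ i, K i * ((1 + Y ω i) / (1 + Y ω j)) - 1) P :=
    hSint.sub (integrable_const (1 : ℝ))
  calc ∫ ω, Real.log (1 + ∑ i, K i * Y ω i) ∂P
      ≤ ∫ ω, (Real.log (1 + Y ω j) +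
          (∑ i, K i * ((1 + Y ω i) / (1 + Y ω j)) - 1)) ∂P :=
        integral_mono_ae (hint K ⟨hK0, hK1⟩) (hlogj.add hdiff) hbound
    _ = ∫ ω, Real.log (1 + Y ω j) ∂P +
          (∫ ω, ∑ i, K i * ((1 + Y ω i) / (1 + Y ω j)) ∂P - 1) := by
        rw [integral_add hlogj hdiff, integral_sub hSint (integrable_const _)]
        simp
    _ ≤ ∫ ω, Real.log (1 + Y ω j) ∂P := by linarith
end

section
/- Let m ≥ 2, n ≥ 1, let a ∈ ℝ^m and let M ∈ ℝ^{m×m} be a symmetric positive semidefinite matrix, and define ĝ(K) = (1/n)( K·a - (1/2) K^T M K ). Suppose K', K'' ∈ 𝒦 both satisfy the optimality conditions: for every i, K_i > 0 implies a_i - (M K)_i = K·a - K^T M K, and K_i = 0 implies a_i - (M K)_i ≤ K·a - K^T M K (with K = K' and K = K'' respectively). Then for every α ∈ [0,1], the convex combination K̄_α := α K' + (1-α) K'' lies in 𝒦 and also satisfies these optimality conditions; in particular K̄_α maximizes ĝ over 𝒦. -/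
/-!
Write `g(K) = a - MK` for the (rescaled) gradient of `ĝ`. On the simplex the optimality conditions
are equivalent to the inequality `g(K)_i ≤ K·g(K)` for all `i` (`optCond_iff_le`), hence imply the
variational inequality `L·g(K) ≤ K·g(K)` for every `L` in the simplex (`OptCond.dotProduct_le`).
Applying it to `K'` against `K''` and conversely, and adding, gives `(K' - K'')ᵀM(K' - K'') ≤ 0`,
so positive semidefiniteness forces `MK' = MK''` (`OptCond.mulVec_eq`). Thus `K'`, `K''` and all
their convex combinations share the same gradient `g`, and `K'·g = K''·g`, which yields the
optimality conditions for the combinations. Finally, the variational inequality together with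
`M ≥ 0` gives global maximality (`OptCond.objective_le`), as `ĝ` is concave.
-/

open MeasureTheory

/-- The optimality conditions of Lemma 4 for `ĝ(K) = (1/n)(K·a - (1/2)KᵀMK)` over the
unit simplex: for every `i`, `K_i > 0` implies `a_i - (MK)_i = K·a - KᵀMK`, and
`K_i = 0` implies `a_i - (MK)_i ≤ K·a - KᵀMK`. -/
def OptCond (m : ℕ) (a : Fin m → ℝ) (M : Matrix (Fin m) (Fin m) ℝ)
    (K : Fin m → ℝ) : Prop :=
  ∀ i,
    (0 < K i →
      a i - ∑ j, M i j * K j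
        = (∑ i', K i' * a i') - ∑ i', ∑ j, K i' * M i' j * K j) ∧
    (K i = 0 →
      a i - ∑ j, M i j * K j
        ≤ (∑ i', K i' * a i') - ∑ i', ∑ j, K i' * M i' j * K j)

lemma quad_eq_dotProduct {m : ℕ} (M : Matrix (Fin m) (Fin m) ℝ) (K : Fin m → ℝ) :
    ∑ i, ∑ j, K i * M i j * K j = K ⬝ᵥ M.mulVec K := by
  simp only [dotProduct, Matrix.mulVec, Finset.mul_sum, mul_assoc]

/-- A weighted average over the simplex is at most any common upper bound of its terms. -/
lemma dotProduct_le_of_mem_unitSimplex {m : ℕ} {L g : Fin m → ℝ} {c : ℝ}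
    (hL : L ∈ unitSimplex m) (hg : ∀ i, g i ≤ c) : L ⬝ᵥ g ≤ c :=
  calc L ⬝ᵥ g ≤ ∑ i, L i * c :=
        Finset.sum_le_sum fun i _ => mul_le_mul_of_nonneg_left (hg i) (hL.1 i)
    _ = c := by rw [← Finset.sum_mul, hL.2, one_mul]

/-- On the simplex the equality on the support is automatic: the nonnegative numbers
`K_i (K·g - g_i)` sum to zero, so each of them vanishes. -/
lemma optCond_iff_le {m : ℕ} {a : Fin m → ℝ} {M : Matrix (Fin m) (Fin m) ℝ} {K : Fin m → ℝ}
    (hK : K ∈ unitSimplex m) :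
    OptCond m a M K ↔ ∀ i, (a - M.mulVec K) i ≤ K ⬝ᵥ (a - M.mulVec K) := by
  have hc : (∑ i, K i * a i) - ∑ i, ∑ j, K i * M i j * K j = K ⬝ᵥ (a - M.mulVec K) := by
    rw [quad_eq_dotProduct, dotProduct_sub]; rfl
  have hg : ∀ i, a i - ∑ j, M i j * K j = (a - M.mulVec K) i := fun i => rfl
  unfold OptCond
  simp only [hc, hg]
  generalize a - M.mulVec K = g
  constructor
  · intro h i
    rcases (hK.1 i).lt_or_eq with hi | hi
    · exact ((h i).1 hi).le
    · exact (h i).2 hi.symm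
  · intro h i
    refine ⟨fun hi => ?_, fun _ => h i⟩
    have hsum : ∑ j, K j * (K ⬝ᵥ g - g j) = 0 := by
      simp only [mul_sub, Finset.sum_sub_distrib, ← Finset.sum_mul, hK.2, one_mul]
      exact sub_self _
    have hz := (Finset.sum_eq_zero_iff_of_nonneg
      (fun j _ => mul_nonneg (hK.1 j) (sub_nonneg.2 (h j)))).1 hsum i (Finset.mem_univ i)
    rcases mul_eq_zero.1 hz with h0 | h0 <;> linarith

lemma OptCond.dotProduct_le {m : ℕ} {a : Fin m → ℝ} {M : Matrix (Fin m) (Fin m) ℝ}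
    {K L : Fin m → ℝ} (h : OptCond m a M K) (hK : K ∈ unitSimplex m) (hL : L ∈ unitSimplex m) :
    L ⬝ᵥ (a - M.mulVec K) ≤ K ⬝ᵥ (a - M.mulVec K) :=
  dotProduct_le_of_mem_unitSimplex hL ((optCond_iff_le hK).1 h)

lemma OptCond.mulVec_eq {m : ℕ} {a : Fin m → ℝ} {M : Matrix (Fin m) (Fin m) ℝ}
    {K L : Fin m → ℝ} (hM : M.PosSemidef) (hK : OptCond m a M K) (hL : OptCond m a M L)
    (hKs : K ∈ unitSimplex m) (hLs : L ∈ unitSimplex m) : M.mulVec K = M.mulVec L := by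
  have h1 := hK.dotProduct_le hKs hLs
  have h2 := hL.dotProduct_le hLs hKs
  have h3 := hM.dotProduct_mulVec_nonneg (K - L)
  have h4 := hM.dotProduct_mulVec_zero_iff (K - L)
  simp only [star_trivial] at h3 h4
  have h5 : (K - L) ⬝ᵥ M.mulVec (K - L) = 0 := by
    refine le_antisymm ?_ h3
    simp only [Matrix.mulVec_sub, dotProduct_sub, sub_dotProduct] at *
    linarith
  have h6 := h4.1 h5
  rwa [Matrix.mulVec_sub, sub_eq_zero] at h6

/-- The first-order conditions are sufficient for global maximality, because the objective is
concave. -/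
lemma OptCond.objective_le {m : ℕ} {a : Fin m → ℝ} {M : Matrix (Fin m) (Fin m) ℝ}
    {K L : Fin m → ℝ} (hsym : M.IsSymm) (hM : M.PosSemidef) (hK : OptCond m a M K)
    (hKs : K ∈ unitSimplex m) (hLs : L ∈ unitSimplex m) :
    L ⬝ᵥ a - (1 / 2) * (L ⬝ᵥ M.mulVec L) ≤ K ⬝ᵥ a - (1 / 2) * (K ⬝ᵥ M.mulVec K) := by
  have h1 := hK.dotProduct_le hKs hLs
  have h2 := hM.dotProduct_mulVec_nonneg (K - L)
  have hcomm : K ⬝ᵥ M.mulVec L = L ⬝ᵥ M.mulVec K := by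
    rw [Matrix.dotProduct_mulVec, ← Matrix.mulVec_transpose, hsym.eq, dotProduct_comm]
  simp only [star_trivial, Matrix.mulVec_sub, dotProduct_sub, sub_dotProduct] at h1 h2
  linarith

/-- Theorem 1 (A Version of the Two-Fund Theorem): if `K'` and `K''` in the unit simplex
both satisfy the optimality conditions of Lemma 4, then every convex combination
`K̄_α = α K' + (1-α) K''` also lies in the simplex, satisfies the optimality conditions,
and in particular maximizes `ĝ` over the simplex. -/
theorem two_fund_theorem (m n : ℕ) (hm : 2 ≤ m) (hn : 1 ≤ n)
    (a : Fin m → ℝ) (M : Matrix (Fin m) (Fin m) ℝ)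
    (hsym : M.IsSymm) (hpsd : M.PosSemidef)
    (K' K'' : Fin m → ℝ) (hK' : K' ∈ unitSimplex m) (hK'' : K'' ∈ unitSimplex m)
    (hopt' : OptCond m a M K') (hopt'' : OptCond m a M K'')
    (α : ℝ) (hα : α ∈ Set.Icc (0 : ℝ) 1) :
    (fun i => α * K' i + (1 - α) * K'' i) ∈ unitSimplex m ∧
    OptCond m a M (fun i => α * K' i + (1 - α) * K'' i) ∧
    ∀ K ∈ unitSimplex m,
      (1 / (n : ℝ)) * (∑ i, K i * a i - (1 / 2) * ∑ i, ∑ j, K i * M i j * K j)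
        ≤ (1 / (n : ℝ)) *
            (∑ i, (α * K' i + (1 - α) * K'' i) * a i
              - (1 / 2) * ∑ i, ∑ j,
                  (α * K' i + (1 - α) * K'' i) * M i j * (α * K' j + (1 - α) * K'' j)) := by
  have hs : (fun i => α * K' i + (1 - α) * K'' i) ∈ unitSimplex m := by
    refine ⟨fun i => add_nonneg (mul_nonneg hα.1 (hK'.1 i))
      (mul_nonneg (sub_nonneg.2 hα.2) (hK''.1 i)), ?_⟩
    rw [Finset.sum_add_distrib, ← Finset.mul_sum, ← Finset.mul_sum, hK'.2, hK''.2]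
    ring
  have hM := hopt'.mulVec_eq hpsd hopt'' hK' hK''
  have hbar : (fun i => α * K' i + (1 - α) * K'' i) = α • K' + (1 - α) • K'' := rfl
  have hMbar : M.mulVec (α • K' + (1 - α) • K'') = M.mulVec K' := by
    rw [Matrix.mulVec_add, Matrix.mulVec_smul, Matrix.mulVec_smul, ← hM, ← add_smul,
      add_sub_cancel, one_smul]
  have hopt : OptCond m a M (fun i => α * K' i + (1 - α) * K'' i) := by
    rw [optCond_iff_le hs, hbar, hMbar]
    intro i
    have h1 := (optCond_iff_le hK').1 hopt' i
    -- The common gradient has the same average under both weights.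
    have h2 : K'' ⬝ᵥ (a - M.mulVec K') = K' ⬝ᵥ (a - M.mulVec K') := by
      refine le_antisymm (hopt'.dotProduct_le hK' hK'') ?_
      have := hopt''.dotProduct_le hK'' hK'
      rwa [← hM] at this
    rw [add_dotProduct, smul_dotProduct, smul_dotProduct, h2, ← add_smul, add_sub_cancel, one_smul]
    exact h1
  refine ⟨hs, hopt, fun K hK => ?_⟩
  refine mul_le_mul_of_nonneg_left ?_ (by positivity)
  have h := hopt.objective_le hsym hpsd hs hK
  rw [← quad_eq_dotProduct, ← quad_eq_dotProduct] at h
  exact h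
end
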